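/- arXiv:1506.08071 — 2 statements merged into one kernel-verified Lean document; each statement's English description precedes it below -/
import Mathlib

section
/- The order of the group SL_*^1(2,A_n) is (q²−1)·q^{4n−3}·(q+1). -/
open Polynomial Matrix

noncomputable section

abbrev TruncPoly (K : Type) [CommRing K] (n : ℕ) := AdjoinRoot (X ^ n : K[X])

def trStar (K : Type) [CommRing K] (σ : K →+* K) (n : ℕ) :
    TruncPoly K n →+* TruncPoly K n :=
  AdjoinRoot.lift ((AdjoinRoot.of _).comp σ) (-(AdjoinRoot.root _)) (by
    have h : (AdjoinRoot.root (X ^ n : K[X])) ^ n = 0 := by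
      rw [← AdjoinRoot.mk_X, ← map_pow, AdjoinRoot.mk_self]
    rw [eval₂_pow, eval₂_X, neg_pow, h, mul_zero])

/-- The matrix `J = [[0,1],[1,0]]`. -/
def jMat (A : Type) [CommRing A] : Matrix (Fin 2) (Fin 2) A := !![0, 1; 1, 0]

/-- The involution `g ↦ g*` on 2×2 matrices: `(g*)_{ij} = (g_{ji})*`. -/
def mStar (A : Type) [CommRing A] (st : A →+* A) (g : Matrix (Fin 2) (Fin 2) A) :
    Matrix (Fin 2) (Fin 2) A := (g.map st)ᵀ

/-- The group `SL_*^1(2,A)` (as a set of matrices): `g* J g = J`. -/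
def SLstarSet (A : Type) [CommRing A] (st : A →+* A) : Set (Matrix (Fin 2) (Fin 2) A) :=
  {g | mStar A st g * jMat A * g = jMat A}


section aux

variable {A : Type} [CommRing A] (st : A →+* A)

lemma mem_SL_iff (hst : ∀ x, st (st x) = x) (g : Matrix (Fin 2) (Fin 2) A) :
    g ∈ SLstarSet A st ↔ st (g 0 0) * g 1 0 + st (g 1 0) * g 0 0 = 0 ∧
      st (g 0 0) * g 1 1 + st (g 1 0) * g 0 1 = 1 ∧
      st (g 0 1) * g 1 1 + st (g 1 1) * g 0 1 = 0 := by
  have h4 : st (g 0 0) * g 1 1 + st (g 1 0) * g 0 1 = 1 →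
      st (g 0 1) * g 1 0 + st (g 1 1) * g 0 0 = 1 := by
    intro h
    have := congrArg st h
    simp only [map_add, map_mul, hst, map_one] at this
    linear_combination this
  simp only [SLstarSet, Set.mem_ofPred_eq, ← Matrix.ext_iff, mStar, jMat, Matrix.mul_apply,
    Fin.sum_univ_two, Fin.forall_fin_two, Matrix.transpose_apply, Matrix.map_apply]
  simp
  constructor
  · rintro ⟨⟨h1, h2⟩, h3, h5⟩
    exact ⟨by linear_combination h1, by linear_combination h2, by linear_combination h5⟩
  · rintro ⟨h1, h2, h3⟩
    have := h4 h2
    exact ⟨⟨by linear_combination h1, by linear_combination h2⟩,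
      by linear_combination this, by linear_combination h3⟩

lemma st_inv (a : Aˣ) : st (a : A) * st ((a⁻¹ : Aˣ) : A) = 1 := by
  rw [← map_mul]; simp

def bigEquiv (hst : ∀ x, st (st x) = x) (P : A → Prop) :
    {g : Matrix (Fin 2) (Fin 2) A // g ∈ SLstarSet A st ∧ IsUnit (g 0 0) ∧
      P (st (g 0 0) * g 1 0)} ≃
    Aˣ × {s : A // st s = -s ∧ P s} × {s : A // st s = -s} where
  toFun g := ⟨g.2.2.1.unit, ⟨st (g.1 0 0) * g.1 1 0, by
      have := ((mem_SL_iff st hst _).1 g.2.1).1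
      rw [map_mul, hst]; linear_combination this, g.2.2.2⟩,
    ⟨((g.2.2.1.unit⁻¹ : Aˣ) : A) * g.1 0 1, by
      obtain ⟨h1, h2, h3⟩ := (mem_SL_iff st hst _).1 g.2.1
      have hu := st_inv st g.2.2.1.unit
      have hv : (g.2.2.1.unit : A) * ((g.2.2.1.unit⁻¹ : Aˣ) : A) = 1 := by simp
      simp only [IsUnit.unit_spec] at hu hv
      generalize ((g.2.2.1.unit⁻¹ : Aˣ) : A) = i at *
      have h2' := congrArg st h2
      simp only [map_add, map_mul, hst, map_one] at h2' ⊢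
      generalize g.1 0 0 = a at *
      generalize g.1 0 1 = b at *
      generalize g.1 1 0 = c at *
      generalize g.1 1 1 = d at *
      generalize st a = a' at *
      generalize st b = b' at *
      generalize st c = c' at *
      generalize st d = d' at *
      generalize st i = i' at *
      linear_combination -b' * i' * h2 - b * i * h2' + b' * d * hu + b * d' * hv + h3 +
        b * b' * i * i' * h1 - b * b' * i * c * hu - b * b' * i' * c' * hv⟩⟩
  invFun x := ⟨!![(x.1 : A), x.1 * x.2.2.1; st ((x.1⁻¹ : Aˣ) : A) * x.2.1.1,
      st ((x.1⁻¹ : Aˣ) : A) * (1 + x.2.1.1 * x.2.2.1)], by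
    obtain ⟨a, ⟨s, hs, hP⟩, ⟨u, hu⟩⟩ := x
    have h1 := st_inv st a
    have h2 : (a : A) * ((a⁻¹ : Aˣ) : A) = 1 := by simp
    refine ⟨(mem_SL_iff st hst _).2 ?_, by simp, ?_⟩
    · simp only [Matrix.of_apply, Matrix.cons_val', Matrix.cons_val_zero, Matrix.cons_val_one,
        Matrix.cons_val_fin_one, map_mul, map_add, map_one, hst, hs, hu]
      generalize ((a⁻¹ : Aˣ) : A) = i at *
      refine ⟨?_, ?_, ?_⟩
      · linear_combination s * h1 - s * h2
      · linear_combination (1 + s * u) * h1 - s * u * h2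
      · linear_combination (-u * (1 + s * u)) * h1 + (1 + s * u) * u * h2
    · simp only [Matrix.of_apply, Matrix.cons_val', Matrix.cons_val_zero, Matrix.cons_val_one,
        Matrix.cons_val_fin_one]
      rwa [← mul_assoc, h1, one_mul]⟩
  left_inv g := by
    obtain ⟨g, hg, ha, hP⟩ := g
    obtain ⟨h1, h2, h3⟩ := (mem_SL_iff st hst _).1 hg
    have hu := st_inv st ha.unit
    have hv : (ha.unit : A) * ((ha.unit⁻¹ : Aˣ) : A) = 1 := by simp
    simp only [IsUnit.unit_spec] at hu hv
    apply Subtype.ext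
    simp only [IsUnit.unit_spec]
    generalize ((ha.unit⁻¹ : Aˣ) : A) = i at *
    ext r c
    fin_cases r <;> fin_cases c <;> simp
    · linear_combination g 0 1 * hv
    · linear_combination g 1 0 * hu
    · linear_combination st i * i * g 0 1 * h1 - st i * g 0 1 * st (g 1 0) * hv - st i * h2 +
        g 1 1 * hu
  right_inv x := by
    obtain ⟨a, ⟨s, hs, hP⟩, ⟨u, hu⟩⟩ := x
    have h1 := st_inv st a
    refine Prod.ext (Units.ext (by simp)) (Prod.ext (Subtype.ext ?_) (Subtype.ext ?_))
    · simp [← mul_assoc, h1]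
    · simp

def swapEquiv (hst : ∀ x, st (st x) = x)
    (hloc : ∀ x y : A, x + y = 1 → IsUnit x ∨ IsUnit y) :
    {g : Matrix (Fin 2) (Fin 2) A // g ∈ SLstarSet A st ∧ ¬ IsUnit (g 0 0)} ≃
    {g : Matrix (Fin 2) (Fin 2) A // g ∈ SLstarSet A st ∧ IsUnit (g 0 0) ∧
      ¬ IsUnit (st (g 0 0) * g 1 0)} where
  toFun g := ⟨!![g.1 1 0, g.1 1 1; g.1 0 0, g.1 0 1], by
    obtain ⟨g, hg, ha⟩ := g
    obtain ⟨h1, h2, h3⟩ := (mem_SL_iff st hst _).1 hg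
    refine ⟨(mem_SL_iff st hst _).2 ?_, ?_, ?_⟩
    · simp
      exact ⟨by linear_combination h1, by linear_combination h2, by linear_combination h3⟩
    · simp
      rcases hloc _ _ h2 with h | h
      · have := (isUnit_of_mul_isUnit_left h).map st
        rw [hst] at this
        exact absurd this ha
      · have := (isUnit_of_mul_isUnit_left h).map st
        rwa [hst] at this
    · intro h
      exact ha (by simpa using isUnit_of_mul_isUnit_right h)⟩
  invFun g := ⟨!![g.1 1 0, g.1 1 1; g.1 0 0, g.1 0 1], by
    obtain ⟨g, hg, ha, hb⟩ := g
    obtain ⟨h1, h2, h3⟩ := (mem_SL_iff st hst _).1 hg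
    refine ⟨(mem_SL_iff st hst _).2 ?_, ?_⟩
    · simp
      exact ⟨by linear_combination h1, by linear_combination h2, by linear_combination h3⟩
    · simp
      exact fun h => hb ((ha.map st).mul h)⟩
  left_inv g := by
    apply Subtype.ext
    ext r c
    fin_cases r <;> fin_cases c <;> simp
  right_inv g := by
    apply Subtype.ext
    ext r c
    fin_cases r <;> fin_cases c <;> simp

lemma card_SL_general [Finite A] (hst : ∀ x, st (st x) = x)
    (hloc : ∀ x y : A, x + y = 1 → IsUnit x ∨ IsUnit y) :
    Nat.card (SLstarSet A st) = Nat.card Aˣ * Nat.card {s : A // st s = -s} *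
      (Nat.card {s : A // st s = -s} + Nat.card {s : A // st s = -s ∧ ¬ IsUnit s}) := by
  classical
  have e1 := Nat.card_congr (bigEquiv st hst (fun _ => True))
  have e2 := Nat.card_congr ((swapEquiv st hst hloc).trans (bigEquiv st hst (fun s => ¬ IsUnit s)))
  simp only [Nat.card_prod, and_true] at e1 e2
  have e3 : Nat.card (SLstarSet A st) =
      Nat.card {g : Matrix (Fin 2) (Fin 2) A // g ∈ SLstarSet A st ∧ IsUnit (g 0 0)} +
      Nat.card {g : Matrix (Fin 2) (Fin 2) A // g ∈ SLstarSet A st ∧ ¬ IsUnit (g 0 0)} := by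
    rw [← Nat.card_sum]
    refine Nat.card_congr ((Equiv.sumCompl (fun g : SLstarSet A st => IsUnit (g.1 0 0))).symm.trans
      (Equiv.sumCongr (Equiv.subtypeSubtypeEquivSubtypeInter _ (fun g : Matrix (Fin 2) (Fin 2) A => IsUnit (g 0 0)))
        (Equiv.subtypeSubtypeEquivSubtypeInter _ (fun g : Matrix (Fin 2) (Fin 2) A => ¬ IsUnit (g 0 0)))))
  rw [e3, e1, e2]
  ring

/-- `|S|^2 = |A|`. -/
lemma card_skew_sq (hst : ∀ x, st (st x) = x) (d e h : A) (hde : d * e = 1) (h2 : 2 * h = 1)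
    (hd : st d = -d) : Nat.card A = Nat.card {s : A // st s = -s} ^ 2 := by
  have hh : st h = h := by
    have := congrArg st h2
    simp only [map_mul, map_one, map_ofNat] at this
    linear_combination h * this - st h * h2
  have he : st e = -e := by
    have := congrArg st hde
    simp only [map_mul, map_one, hd] at this
    linear_combination (-e) * this - st e * hde
  rw [sq, ← Nat.card_prod]
  refine Nat.card_congr ⟨fun a => ⟨⟨h * (a - st a), ?_⟩, ⟨d * h * (a + st a), ?_⟩⟩,
    fun x => x.1.1 + e * x.2.1, ?_, ?_⟩
  · simp only [map_mul, map_sub, hst, hh]; ring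
  · simp only [map_mul, map_add, hst, hh, hd]; ring
  · intro a
    simp only
    linear_combination a * h2 + h * (a + st a) * hde
  · rintro ⟨⟨s, hs⟩, ⟨u, hu⟩⟩
    refine Prod.ext (Subtype.ext ?_) (Subtype.ext ?_)
    · simp only [map_mul, map_add, hs, hu, he]
      linear_combination s * h2
    · simp only [map_mul, map_add, hs, hu, he]
      linear_combination u * d * e * h2 + u * hde

end aux

section trunc

variable (K : Type) [Field K] (n : ℕ)

def augm (hn : 0 < n) : TruncPoly K n →+* K :=
  AdjoinRoot.lift (RingHom.id K) 0 (by simp [hn.ne'])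

lemma augm_of (hn : 0 < n) (z : K) : augm K n hn (AdjoinRoot.of _ z) = z := by
  simp [augm]

lemma root_nilp : IsNilpotent (AdjoinRoot.root (X ^ n : K[X])) :=
  ⟨n, by rw [← AdjoinRoot.mk_X, ← map_pow, AdjoinRoot.mk_self]⟩

lemma isUnit_iff_augm (hn : 0 < n) (a : TruncPoly K n) : IsUnit a ↔ augm K n hn a ≠ 0 := by
  constructor
  · intro h
    exact (h.map (augm K n hn)).ne_zero
  · intro h
    induction a using AdjoinRoot.induction_on with
    | ih f =>
      have hf : AdjoinRoot.mk (X ^ n : K[X]) f =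
          AdjoinRoot.root _ * AdjoinRoot.mk _ f.divX + AdjoinRoot.of _ (f.coeff 0) := by
        conv_lhs => rw [← Polynomial.X_mul_divX_add f]
        rw [map_add, map_mul, AdjoinRoot.mk_X, AdjoinRoot.mk_C]
      rw [hf] at h ⊢
      have hc : f.coeff 0 ≠ 0 := by
        intro h0
        apply h
        rw [h0]
        simp [augm]
      exact (((Commute.all _ _).isNilpotent_mul_right (root_nilp K n))).isUnit_add_right_of_commute
        ((IsUnit.mk0 _ hc).map _) (Commute.all _ _)

lemma augm_trStar (σ : K →+* K) (hn : 0 < n) (a : TruncPoly K n) :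
    augm K n hn (trStar K σ n a) = σ (augm K n hn a) := by
  have : (augm K n hn).comp (trStar K σ n) = σ.comp (augm K n hn) := by
    apply AdjoinRoot.ringHom_ext
    · ext z; simp [augm, trStar]
    · simp [augm, trStar]
  exact DFunLike.congr_fun this a

lemma trStar_of (σ : K →+* K) (z : K) :
    trStar K σ n (AdjoinRoot.of _ z) = AdjoinRoot.of _ (σ z) := by
  simp [trStar]

lemma trStar_invol (σ : K →+* K) (hσ : ∀ z, σ (σ z) = z) (a : TruncPoly K n) :
    trStar K σ n (trStar K σ n a) = a := by
  have : (trStar K σ n).comp (trStar K σ n) = RingHom.id _ := by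
    apply AdjoinRoot.ringHom_ext
    · ext z; simp [trStar, hσ]
    · simp [trStar]
  exact DFunLike.congr_fun this a

lemma card_trunc [Fintype K] : Nat.card (TruncPoly K n) = Fintype.card K ^ n := by
  have hm : (X ^ n : K[X]).Monic := monic_X_pow n
  let b := (AdjoinRoot.powerBasis' hm)
  have hf := b.finrank
  have := b.finite
  rw [Module.natCard_eq_pow_finrank (K := K), hf, Nat.card_eq_fintype_card]
  simp [b]

lemma card_trunc_ker (hn : 0 < n) : Nat.card (TruncPoly K n) =
    Nat.card {a : TruncPoly K n // ¬ IsUnit a} * Nat.card K := by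
  rw [← Nat.card_prod]
  refine Nat.card_congr ⟨fun a => ⟨⟨a - AdjoinRoot.of _ (augm K n hn a), ?_⟩, augm K n hn a⟩,
    fun x => x.1.1 + AdjoinRoot.of _ x.2, ?_, ?_⟩
  · rw [isUnit_iff_augm K n hn, map_sub, augm_of]; simp
  · intro a; simp
  · rintro ⟨⟨a, ha⟩, z⟩
    rw [isUnit_iff_augm K n hn, not_not] at ha
    refine Prod.ext (Subtype.ext ?_) ?_
    · simp only [map_add, ha, augm_of]; simp
    · simp only [map_add, ha, augm_of]; simp

lemma card_skew_ker (σ : K →+* K) (hn : 0 < n) :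
    Nat.card {s : TruncPoly K n // trStar K σ n s = -s} =
    Nat.card {s : TruncPoly K n // trStar K σ n s = -s ∧ ¬ IsUnit s} *
      Nat.card {z : K // σ z = -z} := by
  rw [← Nat.card_prod]
  refine Nat.card_congr ⟨fun a => ⟨⟨a.1 - AdjoinRoot.of _ (augm K n hn a.1), ?_, ?_⟩,
    ⟨augm K n hn a.1, ?_⟩⟩,
    fun x => ⟨x.1.1 + AdjoinRoot.of _ x.2.1, ?_⟩, ?_, ?_⟩
  · rw [map_sub, trStar_of, ← augm_trStar, a.2, map_neg, map_neg]; ring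
  · rw [isUnit_iff_augm K n hn, map_sub, augm_of]; simp
  · rw [← augm_trStar, a.2, map_neg]
  · rw [map_add, trStar_of, x.1.2.1, x.2.2, map_neg]; ring
  · intro a; apply Subtype.ext; simp
  · rintro ⟨⟨a, ha', ha⟩, z, hz⟩
    rw [isUnit_iff_augm K n hn, not_not] at ha
    refine Prod.ext (Subtype.ext ?_) (Subtype.ext ?_)
    · simp only [map_add, ha, augm_of]; simp
    · simp only [map_add, ha, augm_of]; simp

end trunc

/-- the order of `SL_*^1(2,A_n)` is `(q²−1)·q^{4n−3}·(q+1)`. -/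
theorem card_SLstar_truncPoly
    (p t q : ℕ) (hp : p.Prime) (hp2 : Odd p) (ht : 0 < t) (hq : q = p ^ t)
    (k K : Type) [Field k] [Fintype k] [Field K] [Fintype K] [Algebra k K]
    (hcardk : Fintype.card k = q) (hcardK : Fintype.card K = q ^ 2)
    (Δ : K) (hΔ : Δ ∉ Set.range (algebraMap k K))
    (hΔ2 : Δ ^ 2 ∈ Set.range (algebraMap k K))
    (σ : K →+* K) (hσk : ∀ c : k, σ (algebraMap k K c) = algebraMap k K c)
    (hσne : σ ≠ RingHom.id K) (hσΔ : σ Δ = -Δ)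
    (n : ℕ) (hn : 0 < n) :
    Nat.card (SLstarSet (TruncPoly K n) (trStar K σ n)) =
      (q ^ 2 - 1) * q ^ (4 * n - 3) * (q + 1) := by
  have hodd : Odd q := hq ▸ hp2.pow
  have hq0 : 0 < q := hodd.pos
  have h2 : (2 : K) ≠ 0 := by
    intro h
    obtain ⟨m, hm⟩ := hodd.pow (n := 2)
    have h0 : (Fintype.card K : K) = 0 := Nat.cast_card_eq_zero K
    rw [hcardK, hm] at h0
    push_cast at h0
    rw [h] at h0
    simp at h0
  have hΔ0 : Δ ≠ 0 := by
    rintro rfl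
    exact hΔ ⟨0, by simp⟩
  have hinv : ∀ z, σ (σ z) = z := by
    have hinj : Function.Injective
        (fun x : k × k => algebraMap k K x.1 + algebraMap k K x.2 * Δ) := by
      rintro ⟨a, b⟩ ⟨c, d⟩ h
      simp only at h
      by_cases hbd : b = d
      · subst hbd
        simpa using h
      · exfalso
        apply hΔ
        refine ⟨(c - a) / (b - d), ?_⟩
        have hne : algebraMap k K b - algebraMap k K d ≠ 0 := by
          rw [← map_sub]
          simpa [sub_eq_zero] using hbd
        rw [map_div₀, map_sub, map_sub, div_eq_iff hne]
        linear_combination -h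
    have hbij := (Fintype.bijective_iff_injective_and_card _).2 ⟨hinj, by
      rw [Fintype.card_prod, hcardk, hcardK, sq]⟩
    intro z
    obtain ⟨⟨x, y⟩, rfl⟩ := hbij.2 z
    simp [hσk, hσΔ]
  have hA := card_trunc K n
  rw [hcardK] at hA
  have hfin : Finite (TruncPoly K n) := Nat.finite_of_card_ne_zero (by rw [hA]; positivity)
  have hst := trStar_invol K n σ hinv
  have hS : Nat.card {s : TruncPoly K n // trStar K σ n s = -s} = q ^ n := by
    have := card_skew_sq (trStar K σ n) hst (AdjoinRoot.of _ Δ) (AdjoinRoot.of _ Δ⁻¹)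
      (AdjoinRoot.of _ 2⁻¹) (by rw [← map_mul, mul_inv_cancel₀ hΔ0, map_one])
      (by rw [← map_ofNat (AdjoinRoot.of (X ^ n : K[X])) 2, ← map_mul, mul_inv_cancel₀ h2, map_one])
      (by rw [trStar_of, hσΔ, map_neg])
    rw [hA, ← pow_mul, mul_comm, pow_mul] at this
    exact (Nat.pow_left_injective (n := 2) (by norm_num) this).symm
  have hSK : Nat.card {s : K // σ s = -s} = q := by
    have := card_skew_sq σ hinv Δ Δ⁻¹ 2⁻¹ (mul_inv_cancel₀ hΔ0) (mul_inv_cancel₀ h2) hσΔ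
    rw [Nat.card_eq_fintype_card, hcardK] at this
    exact (Nat.pow_left_injective (n := 2) (by norm_num) this).symm
  have hker := card_trunc_ker K n hn
  have hsker := card_skew_ker K n σ hn
  obtain ⟨m, rfl⟩ : ∃ m, n = m + 1 := ⟨n - 1, by omega⟩
  rw [hS, hSK, pow_succ] at hsker
  have hsn := (Nat.eq_of_mul_eq_mul_right hq0 hsker).symm
  rw [hA, Nat.card_eq_fintype_card (α := K), hcardK, pow_succ] at hker
  have hn' := (Nat.eq_of_mul_eq_mul_right (by positivity) hker).symm
  have hU : Nat.card (TruncPoly K (m + 1))ˣ + (q ^ 2) ^ m = (q ^ 2) ^ (m + 1) := by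
    classical
    let e : (TruncPoly K (m + 1))ˣ ≃ {a : TruncPoly K (m + 1) // IsUnit a} :=
      ⟨fun u => ⟨u, u.isUnit⟩, fun a => a.2.unit, fun u => Units.ext rfl, fun a => rfl⟩
    rw [← hA, ← hn', Nat.card_congr e,
      ← Nat.card_sum]
    exact Nat.card_congr (Equiv.sumCompl _)
  have hU' : Nat.card (TruncPoly K (m + 1))ˣ = (q ^ 2) ^ m * (q ^ 2 - 1) := by
    rw [Nat.mul_sub, mul_one, ← pow_succ]
    omega
  rw [card_SL_general (trStar K σ (m + 1)) hst ?_, hS, hsn, hU',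
    show 4 * (m + 1) - 3 = 4 * m + 1 by omega]
  · ring
  · intro x y hxy
    rw [isUnit_iff_augm K _ hn, isUnit_iff_augm K _ hn]
    by_contra! h
    have := congrArg (augm K _ hn) hxy
    rw [map_add, h.1, h.2, map_one] at this
    simp at this
end
end

section
/- Let φ: A_n → A_n be an A_n-linear bijection. Then γ(b, φ(y)) = γ(b, y) holds for all antisymmetric b ∈ A_n^asym and all y ∈ A_n if and only if there exists a ∈ A_n with a a* = 1 such that φ(y) = a y for all y ∈ A_n. In particular, the unitary group U of A_n-linear automorphisms of A_n preserving γ is isomorphic to {a ∈ A_n : a a* = 1}. -/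
open Polynomial Matrix

noncomputable section

/-- The `i`-th coefficient of an element of `K[x]/(x^n)`. -/
def trCoeff (K : Type) [CommRing K] (n : ℕ) (a : TruncPoly K n) (i : ℕ) : K :=
  (AdjoinRoot.modByMonicHom (monic_X_pow n) a).coeff i

/-- The function `γ(b,m) = ψ(−2⁻¹·b·m*·m)`, where `ψ(∑ aᵢxⁱ) = ψ₀(a_{n−1})`. -/
def trGamma (K : Type) [Field K] (σ : K →+* K) (n : ℕ) (ψ₀ : AddChar K ℂ)
    (b m : TruncPoly K n) : ℂ :=
  ψ₀ (trCoeff K n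
    (-(AdjoinRoot.of (X ^ n : K[X]) (2⁻¹ : K)) * b * trStar K σ n m * m) (n - 1))

/-- The unitary group `U(χ,γ,c)`: all `A_n`-linear automorphisms of `A_n`
preserving `γ(b,·)` for every antisymmetric `b`. -/
def unitaryGroup (K : Type) [Field K] (σ : K →+* K) (n : ℕ) (ψ₀ : AddChar K ℂ) :
    Submonoid ((TruncPoly K n) ≃ₗ[TruncPoly K n] TruncPoly K n) where
  carrier := {φ | ∀ b y : TruncPoly K n, trStar K σ n b = -b →
    trGamma K σ n ψ₀ b (φ y) = trGamma K σ n ψ₀ b y}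
  one_mem' := by intro b y _; rfl
  mul_mem' := by
    intro f g hf hg b y hb
    have h1 := hf b (g y) hb
    have h2 := hg b y hb
    simpa [h2] using h1
/-- The group `{a ∈ A_n : a·a* = 1}` (as a submonoid of `A_n`). -/
def normOneGroup (K : Type) [Field K] (σ : K →+* K) (n : ℕ) :
    Submonoid (TruncPoly K n) where
  carrier := {a | a * trStar K σ n a = 1}
  one_mem' := by simp
  mul_mem' := by
    intro a b ha hb
    have ha' : a * trStar K σ n a = 1 := ha
    have hb' : b * trStar K σ n b = 1 := hb
    show a * b * trStar K σ n (a * b) = 1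
    rw [_root_.map_mul]
    calc a * b * (trStar K σ n a * trStar K σ n b)
        = (a * trStar K σ n a) * (b * trStar K σ n b) := by ring
      _ = 1 := by rw [ha', hb', one_mul]

theorem aux_star_of (K : Type) [CommRing K] (σ : K →+* K) (n : ℕ) (c : K) :
    trStar K σ n (AdjoinRoot.of _ c) = AdjoinRoot.of _ (σ c) := by
  simp [trStar]

theorem aux_star_root (K : Type) [CommRing K] (σ : K →+* K) (n : ℕ) :
    trStar K σ n (AdjoinRoot.root _) = -AdjoinRoot.root _ := by
  simp [trStar]

theorem aux_star_star (K : Type) [CommRing K] (σ : K →+* K) (n : ℕ)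
    (hσ : ∀ z, σ (σ z) = z) (a : TruncPoly K n) :
    trStar K σ n (trStar K σ n a) = a := by
  induction a using AdjoinRoot.induction_on with
  | ih f =>
    induction f using Polynomial.induction_on' with
    | add f g hf hg => simp only [map_add, hf, hg]
    | monomial i c =>
      rw [← C_mul_X_pow_eq_monomial, map_mul, map_pow, AdjoinRoot.mk_X, AdjoinRoot.mk_C]
      simp only [map_mul, map_pow, aux_star_of, aux_star_root, map_neg, neg_neg, hσ]

theorem aux_coeff (K : Type) [Field K] (n : ℕ) (hn : 0 < n) (c : K) :
    trCoeff K n (AdjoinRoot.of _ c * AdjoinRoot.root _ ^ (n - 1)) (n - 1) = c := by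
  have h : (AdjoinRoot.of (X ^ n : K[X]) c * AdjoinRoot.root _ ^ (n - 1))
      = AdjoinRoot.mk _ (C c * X ^ (n - 1)) := by
    rw [map_mul, map_pow, AdjoinRoot.mk_X, AdjoinRoot.mk_C]
  rw [h, trCoeff, AdjoinRoot.modByMonicHom_mk, (modByMonic_eq_self_iff (monic_X_pow n)).2]
  · simp
  · rw [degree_X_pow]
    refine (degree_C_mul_X_pow_le _ _).trans_lt ?_
    exact_mod_cast (by omega : n - 1 < n)

theorem aux_root_pow (K : Type) [Field K] (n : ℕ) :
    (AdjoinRoot.root (X ^ n : K[X])) ^ n = 0 := by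
  rw [← AdjoinRoot.mk_X, ← map_pow, AdjoinRoot.mk_self]

theorem aux_socle (K : Type) [Field K] (n : ℕ) (hn : 0 < n) (u : TruncPoly K n)
    (hu : u * AdjoinRoot.root _ = 0) :
    ∃ c : K, u = AdjoinRoot.of _ c * AdjoinRoot.root _ ^ (n - 1) := by
  induction u using AdjoinRoot.induction_on with
  | ih f =>
    rw [← AdjoinRoot.mk_X, ← map_mul, AdjoinRoot.mk_eq_zero] at hu
    obtain ⟨m, rfl⟩ : ∃ m, n = m + 1 := ⟨n - 1, by omega⟩
    rw [pow_succ, mul_dvd_mul_iff_right X_ne_zero] at hu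
    obtain ⟨g, rfl⟩ := hu
    refine ⟨g.coeff 0, ?_⟩
    conv_lhs => rw [← divX_mul_X_add g]
    have := aux_root_pow K (m + 1)
    simp only [map_mul, map_add, map_pow, AdjoinRoot.mk_X, AdjoinRoot.mk_C, Nat.add_sub_cancel]
    linear_combination (AdjoinRoot.mk (X ^ (m + 1)) g.divX) * this

theorem aux_lead (K : Type) [Field K] (n : ℕ) (hn : 0 < n) (s : TruncPoly K n)
    (hs : s ≠ 0) :
    ∃ (m : ℕ) (c : K), c ≠ 0 ∧
      s * AdjoinRoot.root _ ^ m = AdjoinRoot.of _ c * AdjoinRoot.root _ ^ (n - 1) := by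
  classical
  have hex : ∃ m, s * AdjoinRoot.root (X ^ n : K[X]) ^ m = 0 :=
    ⟨n, by rw [aux_root_pow, mul_zero]⟩
  have h0 : Nat.find hex ≠ 0 := by
    intro h
    have := Nat.find_spec hex
    rw [h] at this
    exact hs (by simpa using this)
  obtain ⟨m, hm⟩ := Nat.exists_eq_succ_of_ne_zero h0
  have h1 := Nat.find_spec hex
  have h2 := Nat.find_min hex (m := m) (by omega)
  rw [hm, Nat.succ_eq_add_one, pow_succ, ← mul_assoc] at h1
  obtain ⟨c, hc⟩ := aux_socle K n hn _ h1
  refine ⟨m, c, ?_, hc⟩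
  rintro rfl
  exact h2 (by rw [hc]; simp)

theorem aux_nondeg (K : Type) [Field K] (σ : K →+* K) (n : ℕ) (hn : 0 < n)
    (h2 : (2 : K) ≠ 0) (ψ₀ : AddChar K ℂ)
    (hd : ∃ d : K, σ d = (-1) ^ n * d ∧ ψ₀ d ≠ 1)
    (s : TruncPoly K n) (hs : trStar K σ n s = s)
    (h : ∀ b, trStar K σ n b = -b →
      ψ₀ (trCoeff K n (-(AdjoinRoot.of (X ^ n : K[X]) (2⁻¹ : K)) * b * s) (n - 1)) = 1) :
    s = 0 := by
  by_contra hs0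
  obtain ⟨m, c, hc, hmc⟩ := aux_lead K n hn s hs0
  obtain ⟨d, hd, hψ⟩ := hd
  have hinj : ∀ x y : K, AdjoinRoot.of (X ^ n : K[X]) x * AdjoinRoot.root _ ^ (n - 1) =
      AdjoinRoot.of _ y * AdjoinRoot.root _ ^ (n - 1) → x = y := by
    intro x y hxy
    rw [← aux_coeff K n hn x, hxy, aux_coeff K n hn]
  have hσc : (-1) ^ (n - 1) * σ c = (-1) ^ m * c := by
    apply hinj
    have h3 := congrArg (trStar K σ n) hmc
    simp only [map_mul, map_pow, aux_star_of, aux_star_root, hs] at h3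
    rw [neg_pow, neg_pow (AdjoinRoot.root _) (n - 1)] at h3
    simp only [map_mul, map_pow, map_neg, map_one]
    linear_combination (-1) ^ m * hmc - h3
  have hσc0 : σ c ≠ 0 := (map_ne_zero σ).2 hc
  have key : σ (-2 * c⁻¹ * d) = -((-1) ^ m * (-2 * c⁻¹ * d)) := by
    have hcc : c = (-1) ^ m * (-1) ^ (n - 1) * σ c := by
      have : ((-1 : K) ^ m) * (-1) ^ m = 1 := by rw [← mul_pow]; simp
      linear_combination (-c) * this - (-1) ^ m * hσc
    have hn1 : (-1 : K) ^ n = - (-1) ^ (n - 1) := by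
      obtain ⟨r, rfl⟩ : ∃ r, n = r + 1 := ⟨n - 1, by omega⟩
      simp [pow_succ]
    have e : (c⁻¹ : K) = (-1) ^ m * (-1) ^ (n - 1) * (σ c)⁻¹ := by
      conv_lhs => rw [hcc]
      simp [← inv_pow, inv_neg]
      ring
    have : ((-1 : K) ^ m) * (-1) ^ m = 1 := by rw [← mul_pow]; simp
    simp only [map_mul, map_neg, map_inv₀, map_ofNat, hd]
    rw [e, hn1]
    linear_combination (-2 * (-1) ^ (n - 1) * (σ c)⁻¹ * d) * this
  have h4 := h (AdjoinRoot.of _ (-2 * c⁻¹ * d) * AdjoinRoot.root _ ^ m) (by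
    have : (((-1 : TruncPoly K n) ^ m) * (-1) ^ m) = 1 := by rw [← mul_pow]; simp
    rw [RingHom.map_mul, RingHom.map_pow, aux_star_of, aux_star_root, key, neg_pow (AdjoinRoot.root _) m,
      RingHom.map_neg, RingHom.map_mul (AdjoinRoot.of _) ((-1) ^ m)]
    simp only [map_pow, map_neg, map_one]
    linear_combination (-AdjoinRoot.of (X ^ n : K[X]) (-2 * c⁻¹ * d)
      * AdjoinRoot.root _ ^ m) * this)
  apply hψ
  rw [← h4]
  congr 1
  rw [show -(AdjoinRoot.of (X ^ n : K[X]) (2⁻¹ : K)) * (AdjoinRoot.of _ (-2 * c⁻¹ * d) *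
    AdjoinRoot.root _ ^ m) * s = AdjoinRoot.of _ d * AdjoinRoot.root _ ^ (n - 1) from ?_,
    aux_coeff K n hn]
  have : d = -2⁻¹ * (-2 * c⁻¹ * d) * c := by field_simp
  have this2 : AdjoinRoot.of (X ^ n : K[X]) d = -AdjoinRoot.of (X ^ n : K[X]) 2⁻¹ *
      AdjoinRoot.of (X ^ n : K[X]) (-2 * c⁻¹ * d) * AdjoinRoot.of (X ^ n : K[X]) c := by
    rw [← RingHom.map_neg, ← RingHom.map_mul, ← RingHom.map_mul, ← this]
  rw [this2]
  linear_combination (-(AdjoinRoot.of (X ^ n : K[X]) (2⁻¹ : K)) *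
    AdjoinRoot.of _ (-2 * c⁻¹ * d)) * hmc

theorem aux_linear {A : Type} [CommRing A] (φ : A →ₗ[A] A) (y : A) : φ y = φ 1 * y := by
  have := φ.map_smul y 1
  simpa [mul_comm] using this

/-- a bijective `A_n`-linear map preserves `γ` iff it is
multiplication by some `a` with `a·a* = 1`; in particular the unitary group is
isomorphic to `{a : a·a* = 1}`. -/
theorem unitary_group_description
    (p t q : ℕ) (hp : p.Prime) (hp2 : Odd p) (ht : 0 < t) (hq : q = p ^ t)
    (k K : Type) [Field k] [Fintype k] [Field K] [Fintype K] [Algebra k K]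
    (hcardk : Fintype.card k = q) (hcardK : Fintype.card K = q ^ 2)
    (Δ : K) (hΔ : Δ ∉ Set.range (algebraMap k K))
    (hΔ2 : Δ ^ 2 ∈ Set.range (algebraMap k K))
    (σ : K →+* K) (hσk : ∀ c : k, σ (algebraMap k K c) = algebraMap k K c)
    (hσne : σ ≠ RingHom.id K) (hσΔ : σ Δ = -Δ)
    (n : ℕ) (hn : 0 < n)
    (ψ₀ : AddChar K ℂ)
    (hψk : ∃ c : k, ψ₀ (algebraMap k K c) ≠ 1)
    (hψΔ : ∃ c : k, ψ₀ (Δ * algebraMap k K c) ≠ 1) :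
    (∀ φ : TruncPoly K n →ₗ[TruncPoly K n] TruncPoly K n, Function.Bijective φ →
      ((∀ b y : TruncPoly K n, trStar K σ n b = -b →
          trGamma K σ n ψ₀ b (φ y) = trGamma K σ n ψ₀ b y) ↔
        ∃ a : TruncPoly K n, a * trStar K σ n a = 1 ∧ ∀ y, φ y = a * y)) ∧
    Nonempty (unitaryGroup K σ n ψ₀ ≃* normOneGroup K σ n) := by
  have hqodd : Odd q := hq ▸ hp2.pow
  have h2 : (2 : K) ≠ 0 := by
    intro h
    have hc : ringChar K = 2 := (CharP.ringChar_of_prime_eq_zero Nat.prime_two (by exact_mod_cast h))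
    have := FiniteField.even_card_of_char_two hc
    rw [hcardK] at this
    have := Nat.odd_iff.1 (hqodd.pow (n := 2))
    omega
  have hsurj : ∀ z : K, ∃ c d : k, z = algebraMap k K c + Δ * algebraMap k K d := by
    have hinj : Function.Injective
        (fun v : k × k => algebraMap k K v.1 + Δ * algebraMap k K v.2) := by
      rintro ⟨a, b⟩ ⟨c, d⟩ h
      simp only at h
      by_cases hbd : b = d
      · subst hbd
        have : a = c := (algebraMap k K).injective (add_right_cancel h)
        rw [this]
      · exfalso
        apply hΔ
        refine ⟨(c - a) / (b - d), ?_⟩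
        have hne : algebraMap k K b - algebraMap k K d ≠ 0 := by
          rw [← map_sub]
          exact (_root_.map_ne_zero _).2 (sub_ne_zero.2 hbd)
        rw [map_div₀, map_sub, map_sub, div_eq_iff hne]
        linear_combination -h
    have hb := (Fintype.bijective_iff_injective_and_card _).2 ⟨hinj, by
      rw [Fintype.card_prod, hcardk, hcardK, sq]⟩
    intro z
    obtain ⟨⟨c, d⟩, h⟩ := hb.2 z
    exact ⟨c, d, h.symm⟩
  have hσσ : ∀ z, σ (σ z) = z := by
    intro z
    obtain ⟨c, d, rfl⟩ := hsurj z
    simp [hσk, hσΔ]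
  have hd : ∃ d : K, σ d = (-1) ^ n * d ∧ ψ₀ d ≠ 1 := by
    rcases Nat.even_or_odd n with he | ho
    · obtain ⟨c, hc⟩ := hψk
      exact ⟨_, by rw [hσk, he.neg_one_pow, one_mul], hc⟩
    · obtain ⟨c, hc⟩ := hψΔ
      exact ⟨_, by rw [map_mul, hσk, hσΔ, ho.neg_one_pow]; ring, hc⟩
  have fwd : ∀ φ : TruncPoly K n →ₗ[TruncPoly K n] TruncPoly K n,
      (∀ b y : TruncPoly K n, trStar K σ n b = -b →
          trGamma K σ n ψ₀ b (φ y) = trGamma K σ n ψ₀ b y) →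
        φ 1 * trStar K σ n (φ 1) = 1 := by
    intro φ h
    rw [← sub_eq_zero]
    apply aux_nondeg K σ n hn h2 ψ₀ hd
    · rw [map_sub, map_mul, aux_star_star K σ n hσσ, RingHom.map_one, mul_comm]
    · intro b hb
      have h1 := h b 1 hb
      unfold trGamma at h1
      have e : -(AdjoinRoot.of (X ^ n : K[X]) (2⁻¹ : K)) * b * (φ 1 * trStar K σ n (φ 1) - 1)
        = -(AdjoinRoot.of (X ^ n : K[X]) (2⁻¹ : K)) * b * trStar K σ n (φ 1) * φ 1
          - -(AdjoinRoot.of (X ^ n : K[X]) (2⁻¹ : K)) * b * trStar K σ n 1 * 1 := by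
        rw [RingHom.map_one]; ring
      rw [e, trCoeff, map_sub, coeff_sub, AddChar.map_sub_eq_div]
      unfold trCoeff at h1
      rw [h1]
      exact div_self (ψ₀.val_isUnit _).ne_zero
  have bwd : ∀ a : TruncPoly K n, a * trStar K σ n a = 1 →
      ∀ b y, trGamma K σ n ψ₀ b (a * y) = trGamma K σ n ψ₀ b y := by
    intro a ha b y
    unfold trGamma
    congr 2
    rw [map_mul]
    linear_combination (-(AdjoinRoot.of (X ^ n : K[X]) (2⁻¹ : K)) * b * trStar K σ n y * y) * ha
  refine ⟨fun φ _ => ⟨fun h => ⟨φ 1, fwd φ h, aux_linear φ⟩, ?_⟩, ?_⟩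
  · rintro ⟨a, ha, hφ⟩ b y _
    rw [hφ, bwd a ha]
  · let F : unitaryGroup K σ n ψ₀ →* normOneGroup K σ n :=
      { toFun := fun φ => ⟨φ.1 1, fwd φ.1.toLinearMap φ.2⟩
        map_one' := rfl
        map_mul' := by
          intro f g
          apply Subtype.ext
          exact aux_linear f.1.toLinearMap (g.1 1) }
    refine ⟨MulEquiv.ofBijective F ⟨?_, ?_⟩⟩
    · intro f g h
      have h' : f.1 1 = g.1 1 := congrArg Subtype.val h
      apply Subtype.ext
      apply LinearEquiv.ext
      intro y
      have h3 := aux_linear f.1.toLinearMap y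
      have h4 := aux_linear g.1.toLinearMap y
      simp only [LinearEquiv.coe_coe] at h3 h4
      rw [h3, h4, h']
    · rintro ⟨a, ha⟩
      have ha' : a * trStar K σ n a = 1 := ha
      let u : (TruncPoly K n)ˣ := ⟨a, trStar K σ n a, ha', by rw [mul_comm]; exact ha'⟩
      let e : TruncPoly K n ≃ₗ[TruncPoly K n] TruncPoly K n := LinearEquiv.smulOfUnit u
      have he : ∀ y, e y = a * y := fun y => rfl
      refine ⟨⟨e, ?_⟩, ?_⟩
      · intro b y _
        rw [he, bwd a ha']
      · apply Subtype.ext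
        show e 1 = a
        rw [he, mul_one]
end
end
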